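/- Let L be an even lattice in V, U an isotropic subspace with U = ℚ-span of I where I = U ∩ L, Ĩ ⊆ L* a ℤ-submodule pairing unimodularly with I, Ũ = ℚ-span of Ĩ, W̃ = (U + Ũ)^⊥, Λ̃ = L ∩ W̃, Λ̃* = {w ∈ W̃ : (w, λ) ∈ ℤ for all λ ∈ Λ̃}, and I_{L*} = U ∩ L*. Let M : U → U be a ℚ-linear automorphism with M(I) = I, det M = 1, and M(u) − u ∈ I for every u ∈ I_{L*}, and let γ : W̃ → W̃ be a linear automorphism preserving the restricted bilinear form with γ(Λ̃) = Λ̃ and γ(w) − w ∈ Λ̃ for every w ∈ Λ̃*. Then there exists an isometry A ∈ O(V) such that A(L) = L, A(μ) − μ ∈ L for every μ ∈ L*, A(U) = U, A|_U = M, and A(w) − γ(w) ∈ U for every w ∈ W̃. -/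

import Mathlib

/-- The subspace orthogonal to `U` with respect to the bilinear form `Φ`. -/
def perp {V : Type*} [AddCommGroup V] [Module ℚ V]
    (Φ : V →ₗ[ℚ] V →ₗ[ℚ] ℚ) (U : Submodule ℚ V) : Submodule ℚ V where
  carrier := {v | ∀ u ∈ U, Φ u v = 0}
  add_mem' := by
    intro a b ha hb u hu
    simp only [Set.mem_setOf_eq] at ha hb ⊢
    rw [map_add, ha u hu, hb u hu, add_zero]
  zero_mem' := by
    intro u _
    exact map_zero (Φ u)
  smul_mem' := by
    intro c a ha u hu
    simp only [Set.mem_setOf_eq] at ha ⊢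
    rw [map_smul, ha u hu, smul_zero]

/-- The dual lattice \`L* = {v ∈ V : (v, L) ⊆ ℤ}\` of \`L\`, as a subset of \`V\`. -/
def dualL {V : Type*} [AddCommGroup V] [Module ℚ V]
    (Φ : V →ₗ[ℚ] V →ₗ[ℚ] ℚ) (L : Submodule ℤ V) : Set V :=
  {v | ∀ x ∈ L, ∃ n : ℤ, Φ v x = (n : ℚ)}

/-- The pairing between the ℤ-submodules \`It\` and \`I\` of \`V\` is unimodular: it is
ℤ-valued, and every ℤ-linear functional on \`I\` is represented by a unique element
of \`It\`. -/
def Unimodular {V : Type*} [AddCommGroup V] [Module ℚ V]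
    (Φ : V →ₗ[ℚ] V →ₗ[ℚ] ℚ) (It I : Submodule ℤ V) : Prop :=
  (∀ x ∈ It, ∀ y ∈ I, ∃ n : ℤ, Φ x y = (n : ℚ)) ∧
  ∀ f : ↥I →ₗ[ℤ] ℤ, ∃! x : V, x ∈ It ∧ ∀ y : ↥I, Φ x (y : V) = (f y : ℚ)

/-- The lattice \`Λ̃ = L ∩ W̃\`, as a subset of \`V\`. -/
def lambdaSet {V : Type*} [AddCommGroup V] [Module ℚ V]
    (L : Submodule ℤ V) (Wt : Submodule ℚ V) : Set V :=
  {x | x ∈ L ∧ x ∈ Wt}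

/-- The dual lattice \`Λ̃* = {w ∈ W̃ : (w, Λ̃) ⊆ ℤ}\` of \`Λ̃ = L ∩ W̃\` inside \`W̃\`. -/
def lambdaStarSet {V : Type*} [AddCommGroup V] [Module ℚ V]
    (Φ : V →ₗ[ℚ] V →ₗ[ℚ] ℚ) (L : Submodule ℤ V) (Wt : Submodule ℚ V) : Set V :=
  {x | x ∈ Wt ∧ ∀ y ∈ L, y ∈ Wt → ∃ n : ℤ, Φ x y = (n : ℚ)}

/-- The sublattice \`Ĩ_L = {ũ ∈ Ĩ : ∃ ν ∈ L, (ũ, ·) = (ν, ·) on I}\` of \`Ĩ\`. -/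
def ItLSet {V : Type*} [AddCommGroup V] [Module ℚ V]
    (Φ : V →ₗ[ℚ] V →ₗ[ℚ] ℚ) (L I It : Submodule ℤ V) : Set V :=
  {x | x ∈ It ∧ ∃ ν ∈ L, ∀ y ∈ I, Φ x y = Φ ν y}

/-!
Let `bᵢ` and `tᵢ` be dual bases of `I` and `Ĩ`. Since `U ∩ L*` is a direct summand of `L*`, every
functional on `U` that is integral on `U ∩ L*` is there the pairing with some `ν ∈ L** = L`. As
`M⁻¹ - 1` maps `U ∩ L*` into `L`, this applies to the functionals `u ↦ (tᵢ, M⁻¹ u - u)` and yields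
vectors `tᵢ' ∈ tᵢ + L` that are dual to the basis `M bᵢ`. The Gram matrices of the `tᵢ` and the
`tᵢ'` differ by an integral symmetric matrix with even diagonal, hence by a matrix `c + cᵀ` with `c`
integral, so adding integral combinations of the `M bᵢ` to the `tᵢ'` makes them agree. Now
`bᵢ ↦ M bᵢ`, `tᵢ ↦ tᵢ'` extends to an isometry `A` that sends `w ∈ W̃` to the projection of `γ w`
along `U` to the orthogonal complement of the `M bᵢ` and the `tᵢ'`. For `μ ∈ L*`, the vector
`A μ - μ` lies in `L + U`, and its component in `U` is in `L` because it pairs integrally with the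
`tᵢ'`.
-/

open LinearMap (BilinForm)
open Module

section IntegralFunctionals

variable {R K V : Type*} [CommRing R] [IsDomain R] [IsPrincipalIdealRing R]
  [Field K] [Algebra R K] [IsFractionRing R K]
  [AddCommGroup V] [Module R V] [Module K V] [IsScalarTower R K V]

theorem exists_retraction_ker {P Q : Type*} [AddCommGroup P] [Module R P] [Module.Finite R P]
    [AddCommGroup Q] [Module R Q] [IsTorsionFree R Q] (g : P →ₗ[R] Q) :
    ∃ π : P →ₗ[R] LinearMap.ker g, ∀ x : LinearMap.ker g, π x = x := by
  obtain ⟨σ, hσ⟩ := g.rangeRestrict.exists_rightInverse_of_surjective g.range_rangeRestrict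
  have hgσ (y : LinearMap.range g) : g (σ y) = y := congr_arg Subtype.val (LinearMap.congr_fun hσ y)
  let ρ : P →ₗ[R] P := LinearMap.id - σ ∘ₗ g.rangeRestrict
  have hρ (x : P) : ρ x ∈ LinearMap.ker g := by simp [ρ, hgσ]
  refine ⟨ρ.codRestrict _ hρ, fun x ↦ ?_⟩
  have hx : g.rangeRestrict x = 0 := Subtype.ext x.2
  ext
  simp [ρ, hx]

theorem exists_extend_of_isLattice {W : Type*} [AddCommGroup W] [Module R W] [Module K W]
    [IsScalarTower R K W] (N : Submodule R V) [N.IsLattice K] (f : N →ₗ[R] W) :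
    ∃ F : V →ₗ[K] W, ∀ x : N, F x = f x := by
  let b := Free.chooseBasis R N
  let F := (b.extendOfIsLattice K).constr K (f ∘ b)
  refine ⟨F, fun x ↦ ?_⟩
  have hF : F.restrictScalars R ∘ₗ N.subtype = f :=
    b.ext fun i ↦ by simpa [F] using (b.extendOfIsLattice K).constr_basis K (f ∘ b) i
  exact LinearMap.congr_fun hF x

theorem exists_extend_integral_on_lattice (N : Submodule R V) [N.IsLattice K]
    (U : Submodule K V) (h : U →ₗ[K] K)
    (hh : ∀ u : U, (u : V) ∈ N → h u ∈ (1 : Submodule R K)) :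
    ∃ F : V →ₗ[K] K, (∀ x ∈ N, F x ∈ (1 : Submodule R K)) ∧
      ∀ u : U, (u : V) ∈ N → F u = h u := by
  have : IsTorsionFree R (V ⧸ U) := IsTorsionFree.trans_faithfulSMul R K (V ⧸ U)
  let g : N →ₗ[R] V ⧸ U := U.mkQ.restrictScalars R ∘ₗ N.subtype
  have hgU (x : LinearMap.ker g) : (x : V) ∈ U := (Submodule.Quotient.mk_eq_zero U).mp x.2
  obtain ⟨π, hπ⟩ := exists_retraction_ker g
  let ι : LinearMap.ker g →ₗ[R] U :=
    (N.subtype ∘ₗ (LinearMap.ker g).subtype).codRestrict (U.restrictScalars R) hgU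
  obtain ⟨F, hF⟩ := exists_extend_of_isLattice N (h.restrictScalars R ∘ₗ ι ∘ₗ π)
  refine ⟨F, fun x hx ↦ ?_, fun u hu ↦ ?_⟩
  · rw [hF ⟨x, hx⟩]
    exact hh _ (π ⟨x, hx⟩ : N).2
  · have hu' : (⟨u, hu⟩ : N) ∈ LinearMap.ker g := by simp [g]
    rw [hF ⟨u, hu⟩]
    change h (ι (π (⟨⟨u, hu⟩, hu'⟩ : LinearMap.ker g))) = h u
    rw [hπ]
    rfl

theorem exists_basis_span_eq_of_isLattice (L : Submodule R V) [L.IsLattice K] :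
    ∃ (n : ℕ) (b : Basis (Fin n) K V), Submodule.span R (Set.range b) = L := by
  let b := finBasis R L
  refine ⟨_, b.extendOfIsLattice K, ?_⟩
  have hb : ⇑(b.extendOfIsLattice K) = L.subtype ∘ b := by ext; simp
  rw [hb, Set.range_comp, Submodule.span_image, b.span_eq, Submodule.map_top,
    Submodule.range_subtype]

theorem finiteDimensional_of_isLattice (L : Submodule R V) [L.IsLattice K] :
    FiniteDimensional K V :=
  let ⟨_, b, _⟩ := exists_basis_span_eq_of_isLattice L
  b.finiteDimensional_of_finite

theorem dualSubmodule_dualSubmodule_of_isLattice {B : BilinForm K V} (hnd : B.Nondegenerate)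
    (hB : B.IsSymm) (L : Submodule R V) [L.IsLattice K] :
    B.dualSubmodule (B.dualSubmodule L) = L := by
  obtain ⟨n, b, rfl⟩ := exists_basis_span_eq_of_isLattice L
  exact B.dualSubmodule_dualSubmodule_of_basis hnd hB b

theorem isLattice_dualSubmodule {B : BilinForm K V} (hnd : B.Nondegenerate)
    (L : Submodule R V) [L.IsLattice K] : (B.dualSubmodule L).IsLattice K := by
  obtain ⟨n, b, rfl⟩ := exists_basis_span_eq_of_isLattice L
  have := b.finiteDimensional_of_finite
  rw [B.dualSubmodule_span_of_basis hnd]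
  refine ⟨Submodule.fg_span (Set.finite_range _), ?_⟩
  rw [Submodule.span_span_of_tower, Basis.span_eq]

theorem exists_mem_lattice_forall_apply_eq {B : BilinForm K V} (hnd : B.Nondegenerate)
    (hB : B.IsSymm) (L : Submodule R V) [L.IsLattice K] (U : Submodule K V) (h : U →ₗ[K] K)
    (hh : ∀ u : U, (u : V) ∈ B.dualSubmodule L → h u ∈ (1 : Submodule R K)) :
    ∃ ν ∈ L, ∀ u : U, (u : V) ∈ B.dualSubmodule L → B ν u = h u := by
  have := isLattice_dualSubmodule hnd L
  have := finiteDimensional_of_isLattice (K := K) L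
  obtain ⟨F, hFint, hFh⟩ := exists_extend_integral_on_lattice (B.dualSubmodule L) U h hh
  have hν (v : V) : B ((B.toDual hnd).symm F) v = F v := BilinForm.apply_toDual_symm_apply F v
  refine ⟨(B.toDual hnd).symm F, ?_, fun u hu ↦ by rw [hν, hFh u hu]⟩
  rw [← dualSubmodule_dualSubmodule_of_isLattice hnd hB L]
  exact fun x hx ↦ by rw [hν]; exact hFint x hx

end IntegralFunctionals

/-- A basis `vec` of a totally isotropic subspace together with vectors `dual` pairing with it
as the dual basis. The Gram matrix of `dual` is arbitrary, so that `dual` can be taken inside a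
prescribed lattice. -/
structure IsotropicFrame {K V : Type*} [CommRing K] [AddCommGroup V] [Module K V]
    (B : BilinForm K V) (ι : Type*) [DecidableEq ι] where
  vec : ι → V
  dual : ι → V
  vec_vec : ∀ i j, B (vec i) (vec j) = 0
  dual_vec : ∀ i j, B (dual i) (vec j) = if i = j then 1 else 0

namespace IsotropicFrame

section CommRing

variable {K V ι : Type*} [CommRing K] [AddCommGroup V] [Module K V] {B : BilinForm K V}
  [DecidableEq ι] (F : IsotropicFrame B ι)

/-- The totally isotropic subspace spanned by the vectors of a frame. -/
def isotropic : Submodule K V := Submodule.span K (Set.range F.vec)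

/-- The orthogonal complement of the span of a frame and its dual vectors. -/
def complement : Submodule K V :=
  B.orthogonal (F.isotropic ⊔ Submodule.span K (Set.range F.dual))

theorem vec_mem_isotropic (i : ι) : F.vec i ∈ F.isotropic := Submodule.subset_span ⟨i, rfl⟩

theorem apply_isotropic_eq_zero {v : V} (hv : ∀ i, B v (F.vec i) = 0) {u : V}
    (hu : u ∈ F.isotropic) : B v u = 0 := by
  suffices F.isotropic ≤ LinearMap.ker (B v) from this hu
  exact Submodule.span_le.mpr (Set.range_subset_iff.mpr hv)

theorem isotropic_apply_isotropic {u u' : V} (hu : u ∈ F.isotropic) (hu' : u' ∈ F.isotropic) :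
    B u u' = 0 := by
  suffices F.isotropic ≤ LinearMap.ker (B.flip u') from this hu
  exact Submodule.span_le.mpr <| Set.range_subset_iff.mpr fun i ↦
    F.apply_isotropic_eq_zero (F.vec_vec i) hu'

theorem mem_complement_iff {w : V} :
    w ∈ F.complement ↔ (∀ i, B (F.vec i) w = 0) ∧ ∀ i, B (F.dual i) w = 0 := by
  have hspan (f : ι → V) :
      Submodule.span K (Set.range f) ≤ LinearMap.ker (B.flip w) ↔ ∀ i, B (f i) w = 0 := by
    simp [Submodule.span_le, Set.range_subset_iff]
  rw [← hspan, ← hspan, ← sup_le_iff]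
  rfl

theorem complement_apply_isotropic (hB : B.IsSymm) {w u : V} (hw : w ∈ F.complement)
    (hu : u ∈ F.isotropic) : B w u = 0 :=
  F.apply_isotropic_eq_zero (fun i ↦ hB.eq w _ ▸ (F.mem_complement_iff.mp hw).1 i) hu

theorem vec_dual (hB : B.IsSymm) (i j : ι) : B (F.vec i) (F.dual j) = if i = j then 1 else 0 := by
  rw [hB.eq, F.dual_vec]
  simp only [eq_comm]

variable [Fintype ι]

theorem dual_sum_smul_vec (i : ι) (y : ι → K) : B (F.dual i) (∑ j, y j • F.vec j) = y i := by
  simp [F.dual_vec]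

theorem vec_sum_smul_dual (hB : B.IsSymm) (i : ι) (x : ι → K) :
    B (F.vec i) (∑ j, x j • F.dual j) = x i := by
  simp [F.vec_dual hB]

theorem sum_dual_smul_vec {u : V} (hu : u ∈ F.isotropic) :
    ∑ i, B (F.dual i) u • F.vec i = u := by
  obtain ⟨y, rfl⟩ := (Submodule.mem_span_range_iff_exists_fun K).mp hu
  simp only [dual_sum_smul_vec]

theorem map_eq_sum {W : Type*} [AddCommGroup W] [Module K W] (f : F.isotropic →ₗ[K] W)
    (u : F.isotropic) :
    f u = ∑ i, B (F.dual i) u • f ⟨F.vec i, F.vec_mem_isotropic i⟩ := by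
  have hu : u = ∑ i, B (F.dual i) u • ⟨F.vec i, F.vec_mem_isotropic i⟩ :=
    Subtype.ext <| by simpa using (F.sum_dual_smul_vec u.2).symm
  conv_lhs => rw [hu]
  simp only [map_sum, map_smul]

theorem sum_smul_vec_mem (y : ι → K) : ∑ i, y i • F.vec i ∈ F.isotropic :=
  Submodule.sum_mem _ fun i _ ↦ Submodule.smul_mem _ _ (F.vec_mem_isotropic i)

/-- The vector with given coordinates along `dual` and `vec` and given component in the
complement of a frame. -/
def combine (x y : ι → K) (w : V) : V := ∑ i, x i • F.dual i + ∑ i, y i • F.vec i + w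

theorem apply_combine (hB : B.IsSymm) (x y x' y' : ι → K) {w w' : V}
    (hw : w ∈ F.complement) (hw' : w' ∈ F.complement) :
    B (F.combine x y w) (F.combine x' y' w') =
      ∑ i, ∑ j, x i * x' j * B (F.dual i) (F.dual j) + ∑ i, x i * y' i + ∑ i, y i * x' i
        + B w w' := by
  have hdw (x : ι → K) {w : V} (hw : w ∈ F.complement) : B (∑ i, x i • F.dual i) w = 0 := by
    simp [(F.mem_complement_iff.mp hw).2]
  have hdd : B (∑ i, x i • F.dual i) (∑ i, x' i • F.dual i) =
      ∑ i, ∑ j, x i * x' j * B (F.dual i) (F.dual j) := by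
    simp only [map_sum, LinearMap.sum_apply, map_smul, LinearMap.smul_apply, smul_eq_mul,
      Finset.mul_sum]
    rw [Finset.sum_comm]
    simp only [mul_assoc, mul_left_comm]
  have hdv : B (∑ i, x i • F.dual i) (∑ i, y' i • F.vec i) = ∑ i, x i * y' i := by
    simp [F.dual_vec, mul_comm]
  have hvd : B (∑ i, y i • F.vec i) (∑ i, x' i • F.dual i) = ∑ i, y i * x' i := by
    simp [F.vec_dual hB, mul_comm]
  simp only [combine, map_add, LinearMap.add_apply, hdd, hdv, hvd, hdw x hw',
    F.isotropic_apply_isotropic (F.sum_smul_vec_mem y) (F.sum_smul_vec_mem y'),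
    F.complement_apply_isotropic hB hw (F.sum_smul_vec_mem y'),
    hB.eq (∑ i, y i • F.vec i) w', F.complement_apply_isotropic hB hw' (F.sum_smul_vec_mem y),
    hB.eq w (∑ i, x' i • F.dual i), hdw x' hw]
  ring

/-- The coordinate of a vector along `F.vec i`, complementary to the coordinates
`B (F.vec j)` along `F.dual j`. -/
def vecCoord (i : ι) : V →ₗ[K] K :=
  B (F.dual i) ∘ₗ (LinearMap.id - ∑ j, (B (F.vec j)).smulRight (F.dual j))

/-- The projection onto the complement of a frame along the span of the frame. -/
def residual : V →ₗ[K] V :=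
  LinearMap.id - ∑ i, (B (F.vec i)).smulRight (F.dual i) - ∑ i, (F.vecCoord i).smulRight (F.vec i)

theorem vecCoord_apply (i : ι) (v : V) :
    F.vecCoord i v = B (F.dual i) (v - ∑ j, B (F.vec j) v • F.dual j) := by
  simp [vecCoord]

theorem residual_apply (v : V) :
    F.residual v = v - ∑ i, B (F.vec i) v • F.dual i - ∑ i, F.vecCoord i v • F.vec i := by
  simp [residual]

theorem combine_coords (v : V) :
    F.combine (fun i ↦ B (F.vec i) v) (fun i ↦ F.vecCoord i v) (F.residual v) = v := by
  rw [combine, residual_apply]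
  abel

theorem residual_mem_complement (hB : B.IsSymm) (v : V) : F.residual v ∈ F.complement := by
  rw [mem_complement_iff, residual_apply]
  constructor <;> intro i
  · rw [map_sub, map_sub, F.vec_sum_smul_dual hB, F.isotropic_apply_isotropic
      (F.vec_mem_isotropic i) (F.sum_smul_vec_mem _), sub_self, sub_zero]
  · rw [map_sub, F.dual_sum_smul_vec, vecCoord_apply, sub_self]

theorem vecCoord_vec (i j : ι) : F.vecCoord i (F.vec j) = if i = j then 1 else 0 := by
  simp [vecCoord_apply, F.vec_vec, F.dual_vec]

theorem vecCoord_dual (hB : B.IsSymm) (i j : ι) : F.vecCoord i (F.dual j) = 0 := by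
  simp [vecCoord_apply, F.vec_dual hB]

theorem vecCoord_of_mem_complement (i : ι) {w : V} (hw : w ∈ F.complement) :
    F.vecCoord i w = 0 := by
  simp [vecCoord_apply, F.mem_complement_iff.mp hw]

theorem residual_vec (j : ι) : F.residual (F.vec j) = 0 := by
  simp [residual_apply, F.vec_vec, F.vecCoord_vec]

theorem residual_dual (hB : B.IsSymm) (j : ι) : F.residual (F.dual j) = 0 := by
  simp [residual_apply, F.vec_dual hB, F.vecCoord_dual hB]

theorem residual_of_mem_complement {w : V} (hw : w ∈ F.complement) : F.residual w = w := by
  simp [residual_apply, F.vecCoord_of_mem_complement _ hw, (F.mem_complement_iff.mp hw).1]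

theorem residual_sub_mem_isotropic {w : V} (hw : ∀ i, B (F.vec i) w = 0) :
    F.residual w - w ∈ F.isotropic := by
  have hres : F.residual w - w = -∑ i, F.vecCoord i w • F.vec i := by simp [residual_apply, hw]
  rw [hres]
  exact Submodule.neg_mem _ (F.sum_smul_vec_mem _)

/-- The orthogonal complement of `F.isotropic` modulo `F.isotropic` inherits the form, and the
complement of `F` is a copy of that quotient. -/
theorem apply_residual_residual (hB : B.IsSymm) {w w' : V} (hw : ∀ i, B (F.vec i) w = 0)
    (hw' : ∀ i, B (F.vec i) w' = 0) : B (F.residual w) (F.residual w') = B w w' := by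
  have h : B (F.residual w) (F.residual w' - w') = 0 :=
    F.complement_apply_isotropic hB (F.residual_mem_complement hB w)
      (F.residual_sub_mem_isotropic hw')
  have h' : B w' (F.residual w - w) = 0 :=
    F.apply_isotropic_eq_zero (fun i ↦ hB.eq w' _ ▸ hw' i) (F.residual_sub_mem_isotropic hw)
  rw [map_sub, sub_eq_zero] at h h'
  rw [h, hB.eq, h', hB.eq]

/-- The frame obtained by adding to each `F.dual i` a combination of the vectors of `F`. -/
def shear (c : ι → ι → K) : IsotropicFrame B ι where
  vec := F.vec
  dual i := F.dual i + ∑ j, c i j • F.vec j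
  vec_vec := F.vec_vec
  dual_vec i j := by simp [F.vec_vec, F.dual_vec]

theorem shear_dual_apply_dual (hB : B.IsSymm) (c : ι → ι → K) (i j : ι) :
    B ((F.shear c).dual i) ((F.shear c).dual j) =
      B (F.dual i) (F.dual j) + c i j + c j i := by
  simp only [shear, map_add, LinearMap.add_apply, dual_sum_smul_vec,
    hB.eq (∑ k, c i k • F.vec k) (F.dual j),
    F.isotropic_apply_isotropic (F.sum_smul_vec_mem _) (F.sum_smul_vec_mem _)]
  ring

end CommRing

theorem exists_isometry {K V ι : Type*} [Field K] [AddCommGroup V] [Module K V]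
    [FiniteDimensional K V] {B : BilinForm K V} [DecidableEq ι] [Finite ι]
    (hnd : B.Nondegenerate) (hB : B.IsSymm) (F F' : IsotropicFrame B ι)
    (hgram : ∀ i j, B (F'.dual i) (F'.dual j) = B (F.dual i) (F.dual j))
    (g : F.complement →ₗ[K] F'.complement)
    (hg : ∀ w w' : F.complement, B (g w : V) (g w') = B (w : V) w') :
    ∃ A : V ≃ₗ[K] V, B.IsOrthogonal A ∧ (∀ i, A (F.vec i) = F'.vec i) ∧
      (∀ i, A (F.dual i) = F'.dual i) ∧ ∀ w : F.complement, A w = g w := by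
  cases nonempty_fintype ι
  let r : V →ₗ[K] F.complement := F.residual.codRestrict _ (F.residual_mem_complement hB)
  let A₀ : V →ₗ[K] V := ∑ i, (B (F.vec i)).smulRight (F'.dual i) +
    ∑ i, (F.vecCoord i).smulRight (F'.vec i) + F'.complement.subtype ∘ₗ g ∘ₗ r
  have hA₀ (v : V) :
      A₀ v = F'.combine (fun i ↦ B (F.vec i) v) (fun i ↦ F.vecCoord i v) (g (r v)) := by
    simp [A₀, combine]
  have hisom : B.IsOrthogonal A₀ := fun v v' ↦ by
    conv_rhs => rw [← F.combine_coords v, ← F.combine_coords v']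
    rw [hA₀, hA₀, F'.apply_combine hB _ _ _ _ (g _).2 (g _).2,
      F.apply_combine hB _ _ _ _ (F.residual_mem_complement hB v)
      (F.residual_mem_complement hB v')]
    simp only [hgram, hg]
    rfl
  have hinj : Function.Injective A₀ := LinearMap.ker_eq_bot.mp <|
    LinearMap.ker_eq_bot'.mpr fun v hv ↦ hnd.1 v fun v' ↦ by
      rw [← hisom, hv, map_zero, LinearMap.zero_apply]
  refine ⟨LinearEquiv.ofInjectiveEndo A₀ hinj, hisom, fun i ↦ ?_, fun i ↦ ?_, fun w ↦ ?_⟩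
  · have hr : r (F.vec i) = 0 := Subtype.ext (F.residual_vec i)
    simp [hA₀, combine, hr, F.vec_vec, F.vecCoord_vec]
  · have hr : r (F.dual i) = 0 := Subtype.ext (F.residual_dual hB i)
    simp [hA₀, combine, hr, F.vec_dual hB, F.vecCoord_dual hB]
  · have hr : r w = w := Subtype.ext (F.residual_of_mem_complement w.2)
    simp [hA₀, combine, hr, F.vecCoord_of_mem_complement _ w.2, (F.mem_complement_iff.mp w.2).1]

end IsotropicFrame

/-- An even lattice: an integral `R`-submodule on which the values `B x x` are even. Integrality
is a separate field because evenness does not imply it when `2 = 0`. -/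
structure IsEvenLattice {R K V : Type*} [CommRing R] [Field K] [Algebra R K] [AddCommGroup V]
    [Module R V] [Module K V] [IsScalarTower R K V] (B : BilinForm K V) (L : Submodule R V) :
    Prop where
  le_dualSubmodule : L ≤ B.dualSubmodule L
  even : ∀ x ∈ L, ∃ r : R, B x x = 2 * algebraMap R K r

theorem exists_add_swap_eq_of_even_diagonal {ι S : Type*} [AddZeroClass S] (E : ι → ι → S)
    (hsymm : ∀ i j, E i j = E j i) (heven : ∀ i, Even (E i i)) :
    ∃ c : ι → ι → S, ∀ i j, c i j + c j i = E i j := by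
  classical
  choose k hk using heven
  let := linearOrderOfSTO (α := ι) WellOrderingRel
  refine ⟨fun i j ↦ if i < j then E i j else if i = j then k i else 0, fun i j ↦ ?_⟩
  rcases lt_trichotomy i j with h | rfl | h
  · simp [h, h.not_gt, h.ne']
  · simp [hk]
  · simp [h, h.not_gt, h.ne', hsymm i j]

section Lattice

variable {R K V : Type*} [CommRing R] [Field K] [Algebra R K] [AddCommGroup V] [Module R V]
  [Module K V] [IsScalarTower R K V] {B : BilinForm K V}

theorem smul_mem_of_mem_one {L : Submodule R V} {a : K} (ha : a ∈ (1 : Submodule R K)) {v : V}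
    (hv : v ∈ L) : a • v ∈ L := by
  obtain ⟨r, rfl⟩ := Submodule.mem_one.mp ha
  rw [algebraMap_smul]
  exact L.smul_mem r hv

theorem isEvenLattice_of_forall_even [NeZero (2 : K)] (hB : B.IsSymm) {L : Submodule R V}
    (heven : ∀ x ∈ L, ∃ r : R, B x x = 2 * algebraMap R K r) : IsEvenLattice B L where
  even := heven
  le_dualSubmodule x hx y hy := by
    obtain ⟨a, ha⟩ := heven x hx
    obtain ⟨b, hb⟩ := heven y hy
    obtain ⟨c, hc⟩ := heven (x + y) (L.add_mem hx hy)
    have hpolar : B (x + y) (x + y) = B x x + 2 * B x y + B y y := by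
      simp only [map_add, LinearMap.add_apply, hB.eq y x]
      ring
    refine Submodule.mem_one.mpr ⟨c - a - b, mul_left_cancel₀ (NeZero.ne (2 : K)) ?_⟩
    rw [ha, hb, hc] at hpolar
    simp only [map_sub]
    linear_combination hpolar

theorem mem_iff_apply_mem_of_sub_mem {L : Submodule R V} (hL : L ≤ B.dualSubmodule L)
    {A : V →ₗ[K] V} (hA : B.IsOrthogonal A) (hAL : ∀ μ ∈ B.dualSubmodule L, A μ - μ ∈ L)
    (x : V) : x ∈ L ↔ A x ∈ L := by
  have hmaps {y : V} (hy : y ∈ L) : A y ∈ L := (L.sub_mem_iff_left hy).mp (hAL y (hL hy))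
  refine ⟨hmaps, fun hx ↦ (L.sub_mem_iff_right hx).mp (hAL x fun y hy ↦ ?_)⟩
  rw [← hA]
  exact hL hx _ (hmaps hy)

theorem symm_sub_mem_of_sub_mem {L : Submodule R V} {U : Submodule K V}
    (M : U ≃ₗ[K] U) (hML : ∀ u, (M u : V) ∈ L → (u : V) ∈ L)
    (hM : ∀ u : U, (u : V) ∈ B.dualSubmodule L → (M u : V) - u ∈ L)
    {u : U} (hu : (u : V) ∈ B.dualSubmodule L) : (M.symm u : V) - u ∈ L := by
  have h : (M.symm (M u - u) : V) ∈ L := hML _ (by simpa using hM u hu)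
  simpa using L.neg_mem h

theorem mem_iff_apply_mem_of_forall_apply_eq {A : V ≃ₗ[K] V} {U : Submodule K V}
    {M : U ≃ₗ[K] U} (hAM : ∀ u : U, A u = M u) (x : V) : x ∈ U ↔ A x ∈ U := by
  refine ⟨fun hx ↦ hAM ⟨x, hx⟩ ▸ (M _).2, fun hx ↦ ?_⟩
  have h : A (M.symm ⟨A x, hx⟩) = A x := by rw [hAM, M.apply_symm_apply]
  exact A.injective h ▸ (M.symm _).2

theorem exists_isotropicFrame_span_eq [IsDomain R] [IsPrincipalIdealRing R] [FaithfulSMul R K]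
    {I It : Submodule R V} [Module.Finite R I] (hI : ∀ x ∈ I, ∀ y ∈ I, B x y = 0)
    (hint : ∀ x ∈ It, ∀ y ∈ I, B x y ∈ (1 : Submodule R K))
    (hperf : ∀ f : I →ₗ[R] R, ∃! x, x ∈ It ∧ ∀ y : I, B x y = algebraMap R K (f y)) :
    ∃ (n : ℕ) (F : IsotropicFrame B (Fin n)),
      Submodule.span R (Set.range F.vec) = I ∧ Submodule.span R (Set.range F.dual) = It := by
  have : IsTorsionFree R V := IsTorsionFree.trans_faithfulSMul R K V
  let b := finBasis R I
  choose t ht using fun i ↦ (hperf (b.coord i)).exists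
  have htb (i j) : B (t i) (b j) = if i = j then 1 else 0 := by
    simp [(ht i).2, Finsupp.single_apply, eq_comm, apply_ite]
  have hzero {x : V} (hx : x ∈ It) (hxb : ∀ i, B x (b i) = 0) : x = 0 := by
    have hxI : (B x).restrictScalars R ∘ₗ I.subtype = 0 := b.ext hxb
    exact (hperf 0).unique ⟨hx, fun y ↦ by simpa using LinearMap.congr_fun hxI y⟩
      ⟨It.zero_mem, by simp⟩
  refine ⟨_, ⟨fun i ↦ b i, t, fun i j ↦ hI _ (b i).2 _ (b j).2, htb⟩, ?_,
    le_antisymm ?_ fun x hx ↦ ?_⟩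
  · change Submodule.span R (Set.range (I.subtype ∘ b)) = I
    rw [Set.range_comp, Submodule.span_image, b.span_eq, Submodule.map_top,
      Submodule.range_subtype]
  · exact Submodule.span_le.mpr (Set.range_subset_iff.mpr fun i ↦ (ht i).1)
  · choose a ha using fun i ↦ Submodule.mem_one.mp (hint x hx _ (b i).2)
    have hsum : ∑ i, a i • t i ∈ It := It.sum_mem fun i _ ↦ It.smul_mem _ (ht i).1
    have hxsum : x - ∑ i, a i • t i = 0 := hzero (It.sub_mem hx hsum) fun i ↦ by
      simp [htb, ← ha, ← Algebra.algebraMap_eq_smul_one]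
    exact (Submodule.mem_span_range_iff_exists_fun R).mpr ⟨a, (sub_eq_zero.mp hxsum).symm⟩

end Lattice

namespace IsotropicFrame

section Lattice

variable {R K V ι : Type*} [CommRing R] [Field K] [Algebra R K] [AddCommGroup V] [Module R V]
  [Module K V] [IsScalarTower R K V] {B : BilinForm K V} [DecidableEq ι] {L : Submodule R V}

theorem exists_shear_gram_eq [Fintype ι] (hB : B.IsSymm) (hL : IsEvenLattice B L)
    (F F' : IsotropicFrame B ι) (hdual : ∀ i, F.dual i ∈ B.dualSubmodule L)
    (hdiff : ∀ i, F'.dual i - F.dual i ∈ L) :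
    ∃ c : ι → ι → (1 : Submodule R K), ∀ i j,
      B ((F'.shear fun i j ↦ c i j).dual i) ((F'.shear fun i j ↦ c i j).dual j) =
        B (F.dual i) (F.dual j) := by
  let e (i j : ι) : K := B (F.dual i) (F.dual j) - B (F'.dual i) (F'.dual j)
  let ν (i : ι) : V := F'.dual i - F.dual i
  have he (i j : ι) :
      e i j = -(B (F.dual i) (ν j) + B (F.dual j) (ν i) + B (ν i) (ν j)) := by
    simp only [e, ν, map_sub, LinearMap.sub_apply, hB.eq (F.dual j)]
    ring
  have he_mem (i j : ι) : e i j ∈ (1 : Submodule R K) := by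
    rw [he]
    exact neg_mem <| add_mem (add_mem (hdual i _ (hdiff j)) (hdual j _ (hdiff i)))
      (hL.le_dualSubmodule (hdiff i) _ (hdiff j))
  have he_even (i : ι) : Even (⟨e i i, he_mem i i⟩ : (1 : Submodule R K)) := by
    obtain ⟨a, ha⟩ := hL.even _ (hdiff i)
    refine ⟨-(⟨_, hdual i _ (hdiff i)⟩ + ⟨_, Submodule.mem_one.mpr ⟨a, rfl⟩⟩), Subtype.ext ?_⟩
    change e i i = -(B (F.dual i) (ν i) + _) + -(B (F.dual i) (ν i) + _)
    rw [he, ha]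
    ring
  obtain ⟨c, hc⟩ := exists_add_swap_eq_of_even_diagonal
    (fun i j ↦ (⟨e i j, he_mem i j⟩ : (1 : Submodule R K)))
    (fun i j ↦ Subtype.ext <| by simp only [e, hB.eq (F.dual i), hB.eq (F'.dual i)]) he_even
  refine ⟨c, fun i j ↦ ?_⟩
  have hcij : (c i j : K) + c j i = e i j := congr_arg Subtype.val (hc i j)
  rw [F'.shear_dual_apply_dual hB, add_assoc, hcij]
  simp only [e, add_sub_cancel]

theorem exists_transport [IsDomain R] [IsPrincipalIdealRing R] [IsFractionRing R K]
    (hnd : B.Nondegenerate) (hB : B.IsSymm) [L.IsLattice K] (F : IsotropicFrame B ι)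
    (hdual : ∀ i, F.dual i ∈ B.dualSubmodule L) (M : F.isotropic ≃ₗ[K] F.isotropic)
    (hM : ∀ u : F.isotropic, (u : V) ∈ B.dualSubmodule L → (M.symm u : V) - u ∈ L)
    (hvec : ∀ i, (M ⟨F.vec i, F.vec_mem_isotropic i⟩ : V) ∈ B.dualSubmodule L) :
    ∃ F' : IsotropicFrame B ι, (∀ i, F'.vec i = M ⟨F.vec i, F.vec_mem_isotropic i⟩) ∧
      ∀ i, F'.dual i - F.dual i ∈ L := by
  let h (i : ι) : F.isotropic →ₗ[K] K :=
    B (F.dual i) ∘ₗ F.isotropic.subtype ∘ₗ (M.symm.toLinearMap - LinearMap.id)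
  choose ν hνL hν using fun i ↦ exists_mem_lattice_forall_apply_eq hnd hB L F.isotropic (h i)
    fun u hu ↦ hdual i _ (hM u hu)
  refine ⟨⟨fun i ↦ M ⟨F.vec i, F.vec_mem_isotropic i⟩, fun i ↦ F.dual i + ν i, fun i j ↦
    F.isotropic_apply_isotropic (M _).2 (M _).2, fun i j ↦ ?_⟩, fun i ↦ rfl, fun i ↦ ?_⟩
  · rw [map_add, LinearMap.add_apply, hν i _ (hvec j)]
    simp [h, F.dual_vec]
  · simpa using hνL i

theorem exists_transport_gram_eq [Finite ι] [IsDomain R] [IsPrincipalIdealRing R]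
    [IsFractionRing R K] (hnd : B.Nondegenerate) (hB : B.IsSymm) [L.IsLattice K]
    (hL : IsEvenLattice B L) (F : IsotropicFrame B ι) (hvec : ∀ i, F.vec i ∈ L)
    (hdual : ∀ i, F.dual i ∈ B.dualSubmodule L) (M : F.isotropic ≃ₗ[K] F.isotropic)
    (hML : ∀ u : F.isotropic, (u : V) ∈ L ↔ (M u : V) ∈ L)
    (hM : ∀ u : F.isotropic, (u : V) ∈ B.dualSubmodule L → (M u : V) - u ∈ L) :
    ∃ F' : IsotropicFrame B ι, (∀ i, F'.vec i = M ⟨F.vec i, F.vec_mem_isotropic i⟩) ∧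
      (∀ i, F'.dual i - F.dual i ∈ L) ∧
      ∀ i j, B (F'.dual i) (F'.dual j) = B (F.dual i) (F.dual j) := by
  cases nonempty_fintype ι
  have hMvec (i) : (M ⟨F.vec i, F.vec_mem_isotropic i⟩ : V) ∈ L := (hML _).mp (hvec i)
  obtain ⟨F', hF'vec, hF'dual⟩ := F.exists_transport hnd hB hdual M
    (fun u hu ↦ symm_sub_mem_of_sub_mem M (fun u ↦ (hML u).mpr) hM hu)
    fun i ↦ hL.le_dualSubmodule (hMvec i)
  obtain ⟨c, hc⟩ := F.exists_shear_gram_eq hB hL F' hdual hF'dual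
  refine ⟨F'.shear fun i j ↦ c i j, hF'vec, fun i ↦ ?_, hc⟩
  have hsum : ∑ j, (c i j : K) • F'.vec j ∈ L := L.sum_mem fun j _ ↦
    smul_mem_of_mem_one (c i j).2 (hF'vec j ▸ hMvec j)
  simpa only [shear, add_sub_right_comm] using L.add_mem (hF'dual i) hsum

theorem mem_of_dual_apply_mem_one [Finite ι] (F : IsotropicFrame B ι) (hvec : ∀ i, F.vec i ∈ L)
    {u : V} (hu : u ∈ F.isotropic) (hdual : ∀ i, B (F.dual i) u ∈ (1 : Submodule R K)) :
    u ∈ L := by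
  cases nonempty_fintype ι
  rw [← F.sum_dual_smul_vec hu]
  exact L.sum_mem fun i _ ↦ smul_mem_of_mem_one (hdual i) (hvec i)

theorem residual_apply_of_mem_complement [Fintype ι] (hB : B.IsSymm) (F : IsotropicFrame B ι)
    (v : V) {w : V} (hw : w ∈ F.complement) : B (F.residual v) w = B v w := by
  conv_rhs => rw [← F.combine_coords v, ← F.combine_coords w, F.apply_combine hB _ _ _ _
    (F.residual_mem_complement hB v) (F.residual_mem_complement hB w)]
  simp [F.mem_complement_iff.mp hw, F.vecCoord_of_mem_complement _ hw,
    F.residual_of_mem_complement hw]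

theorem apply_sub_sub_mem_isotropic [Fintype ι] (hB : B.IsSymm) (F : IsotropicFrame B ι)
    {A : V →ₗ[K] V} (hAU : ∀ u ∈ F.isotropic, A u ∈ F.isotropic) (γ : F.complement → V)
    (hAγ : ∀ w : F.complement, A w - γ w ∈ F.isotropic) (μ : V) :
    A μ - μ - (∑ i, B (F.vec i) μ • (A (F.dual i) - F.dual i) +
      (γ ⟨F.residual μ, F.residual_mem_complement hB μ⟩ - F.residual μ)) ∈ F.isotropic := by
  let u : V := ∑ i, F.vecCoord i μ • F.vec i
  have hu : u ∈ F.isotropic := F.sum_smul_vec_mem _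
  let w : F.complement := ⟨F.residual μ, F.residual_mem_complement hB μ⟩
  convert add_mem (sub_mem (hAU u hu) hu) (hAγ w) using 1
  conv_lhs => enter [1]; rw [← F.combine_coords μ]
  simp only [combine, map_add, map_sum, map_smul, smul_sub, Finset.sum_sub_distrib, u, w]
  abel

theorem apply_sub_mem_of_apply_dual_sub_mem [Finite ι] (hB : B.IsSymm)
    (hL : L ≤ B.dualSubmodule L) (F : IsotropicFrame B ι) (hvec : ∀ i, F.vec i ∈ L)
    (hdual : ∀ i, F.dual i ∈ B.dualSubmodule L)
    {A : V →ₗ[K] V} (hA : B.IsOrthogonal A) (hAdual : ∀ i, A (F.dual i) - F.dual i ∈ L)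
    (M : F.isotropic ≃ₗ[K] F.isotropic) (hAM : ∀ u : F.isotropic, A u = M u)
    (hML : ∀ u : F.isotropic, (u : V) ∈ L → (M u : V) ∈ L) (γ : F.complement → V)
    (hAγ : ∀ w : F.complement, A w - γ w ∈ F.isotropic)
    (hγ : ∀ w : F.complement, (∀ y ∈ L, y ∈ F.complement → B w y ∈ (1 : Submodule R K)) →
      γ w - w ∈ L)
    {μ : V} (hμ : μ ∈ B.dualSubmodule L) : A μ - μ ∈ L := by
  cases nonempty_fintype ι
  let w : F.complement := ⟨F.residual μ, F.residual_mem_complement hB μ⟩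
  let l : V := ∑ i, B (F.vec i) μ • (A (F.dual i) - F.dual i) + (γ w - w)
  have hγw : γ w - w ∈ L := hγ w fun y hy hyW ↦ by
    rw [F.residual_apply_of_mem_complement hB μ hyW]
    exact hμ y hy
  have hl : l ∈ L := L.add_mem (L.sum_mem fun i _ ↦
    smul_mem_of_mem_one (hB.eq μ _ ▸ hμ _ (hvec i)) (hAdual i)) hγw
  have hz : A μ - μ - l ∈ F.isotropic :=
    F.apply_sub_sub_mem_isotropic hB (fun u hu ↦ hAM ⟨u, hu⟩ ▸ (M _).2) γ hAγ μ
  let z' : F.isotropic := M.symm ⟨A μ - μ - l, hz⟩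
  have hMz' : (M z' : V) = A μ - μ - l := by simp [z']
  have hz'_dual (i : ι) : B (F.dual i) z' =
      -(B μ (A (F.dual i) - F.dual i) + B l (A (F.dual i) - F.dual i) + B (F.dual i) l) := by
    rw [← hA, hAM, hMz']
    simp only [map_sub, hA (F.dual i) μ, hB.eq μ, hB.eq l, LinearMap.sub_apply]
    ring
  have hz' : (z' : V) ∈ L := F.mem_of_dual_apply_mem_one hvec z'.2 fun i ↦ hz'_dual i ▸
    neg_mem (add_mem (add_mem (hμ _ (hAdual i)) (hL hl _ (hAdual i))) (hdual i _ hl))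
  exact (L.sub_mem_iff_left hl).mp (hMz' ▸ hML z' hz')

theorem exists_isometry_lift [Finite ι] [IsDomain R] [IsPrincipalIdealRing R]
    [IsFractionRing R K] (hnd : B.Nondegenerate) (hB : B.IsSymm) [L.IsLattice K]
    (hL : IsEvenLattice B L) (F : IsotropicFrame B ι) (hvec : ∀ i, F.vec i ∈ L)
    (hdual : ∀ i, F.dual i ∈ B.dualSubmodule L) (M : F.isotropic ≃ₗ[K] F.isotropic)
    (hML : ∀ u : F.isotropic, (u : V) ∈ L ↔ (M u : V) ∈ L)
    (hM : ∀ u : F.isotropic, (u : V) ∈ B.dualSubmodule L → (M u : V) - u ∈ L)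
    (γ : F.complement →ₗ[K] F.complement)
    (hγ : ∀ w w' : F.complement, B (γ w : V) (γ w') = B (w : V) w') :
    ∃ A : V ≃ₗ[K] V, B.IsOrthogonal A ∧ (∀ i, A (F.dual i) - F.dual i ∈ L) ∧
      (∀ u : F.isotropic, A u = M u) ∧ ∀ w : F.complement, A w - γ w ∈ F.isotropic := by
  cases nonempty_fintype ι
  have := finiteDimensional_of_isLattice (K := K) L
  obtain ⟨F', hF'vec, hF'dual, hgram⟩ := F.exists_transport_gram_eq hnd hB hL hvec hdual M hML hM
  have hF'γ (w : F.complement) (i : ι) : B (F'.vec i) (γ w) = 0 := by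
    rw [hB.eq, hF'vec, F.complement_apply_isotropic hB (γ w).2 (M _).2]
  let g : F.complement →ₗ[K] F'.complement :=
    F'.residual.codRestrict _ (F'.residual_mem_complement hB) ∘ₗ F.complement.subtype ∘ₗ γ
  obtain ⟨A, hA, hAvec, hAdual, hAg⟩ := F.exists_isometry hnd hB F' hgram g fun w w' ↦
    (F'.apply_residual_residual hB (hF'γ w) (hF'γ w')).trans (hγ w w')
  have hF' : F'.isotropic ≤ F.isotropic := Submodule.span_le.mpr <|
    Set.range_subset_iff.mpr fun i ↦ hF'vec i ▸ (M _).2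
  refine ⟨A, hA, fun i ↦ hAdual i ▸ hF'dual i, fun u ↦ ?_, fun w ↦ ?_⟩
  · have hAu := F.map_eq_sum (A.toLinearMap ∘ₗ F.isotropic.subtype) u
    have hMu := F.map_eq_sum (F.isotropic.subtype ∘ₗ M.toLinearMap) u
    simp only [LinearMap.comp_apply, LinearEquiv.coe_coe, Submodule.subtype_apply] at hAu hMu
    simp only [hAu, hMu, hAvec, hF'vec]
  · rw [hAg]
    exact hF' (F'.residual_sub_mem_isotropic (hF'γ w))

end Lattice

end IsotropicFrame

theorem stmt18_general {R K V : Type*} [CommRing R] [IsDomain R] [IsPrincipalIdealRing R]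
    [Field K] [Algebra R K] [IsFractionRing R K] [AddCommGroup V] [Module R V] [Module K V]
    [IsScalarTower R K V] {B : BilinForm K V} (hnd : B.Nondegenerate) (hB : B.IsSymm)
    (L : Submodule R V) [L.IsLattice K] (hL : IsEvenLattice B L)
    (U : Submodule K V) (hUiso : ∀ u ∈ U, ∀ u' ∈ U, B u u' = 0)
    (I : Submodule R V) (hI : I = U.restrictScalars R ⊓ L)
    (hU : U = Submodule.span K (I : Set V))
    (It : Submodule R V) (hIt : It ≤ B.dualSubmodule L)
    (hperf : ∀ f : I →ₗ[R] R, ∃! x, x ∈ It ∧ ∀ y : I, B x y = algebraMap R K (f y))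
    (W : Submodule K V) (hW : W = B.orthogonal (U ⊔ Submodule.span K (It : Set V)))
    (M : U ≃ₗ[K] U) (hMI : ∀ u : U, (u : V) ∈ I ↔ (M u : V) ∈ I)
    (hM : ∀ u : U, (u : V) ∈ B.dualSubmodule L → (M u : V) - u ∈ I)
    (γ : W →ₗ[K] W) (hγiso : ∀ w w' : W, B (γ w : V) (γ w') = B (w : V) w')
    (hγ : ∀ w : W, (∀ y ∈ L, y ∈ W → B w y ∈ (1 : Submodule R K)) → (γ w : V) - w ∈ L) :
    ∃ A : V ≃ₗ[K] V, B.IsOrthogonal A ∧ (∀ x, x ∈ L ↔ A x ∈ L) ∧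
      (∀ μ ∈ B.dualSubmodule L, A μ - μ ∈ L) ∧ (∀ x, x ∈ U ↔ A x ∈ U) ∧
      (∀ u : U, A u = M u) ∧ ∀ w : W, A w - γ w ∈ U := by
  have hIL : I ≤ L := hI.trans_le inf_le_right
  have hIU : I ≤ U.restrictScalars R := hI.trans_le inf_le_left
  have hmemI (u : U) : (u : V) ∈ I ↔ (u : V) ∈ L := by simp [hI]
  have : Module.Finite R I := .of_fg ((Submodule.IsLattice.fg (A := K)).of_le hIL)
  obtain ⟨n, F, rfl, rfl⟩ := exists_isotropicFrame_span_eq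
    (fun x hx y hy ↦ hUiso x (hIU hx) y (hIU hy)) (fun x hx y hy ↦ hIt hx y (hIL hy)) hperf
  have hvec (i) : F.vec i ∈ L := hIL (Submodule.subset_span ⟨i, rfl⟩)
  have hdual (i) : F.dual i ∈ B.dualSubmodule L := hIt (Submodule.subset_span ⟨i, rfl⟩)
  obtain rfl : U = F.isotropic := by
    rw [hU, Submodule.span_span_of_tower, IsotropicFrame.isotropic]
  obtain rfl : W = F.complement := by
    rw [hW, Submodule.span_span_of_tower, IsotropicFrame.complement]
  simp only [hmemI] at hMI
  obtain ⟨A, hA, hAdual, hAM, hAγ⟩ := F.exists_isometry_lift hnd hB hL hvec hdual M hMI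
    (fun u hu ↦ hIL (hM u hu)) γ hγiso
  have hAL (μ) (hμ : μ ∈ B.dualSubmodule L) : A μ - μ ∈ L :=
    F.apply_sub_mem_of_apply_dual_sub_mem hB hL.le_dualSubmodule hvec hdual hA hAdual M hAM
      (fun u ↦ (hMI u).mp) (fun w ↦ γ w) hAγ hγ hμ
  exact ⟨A, hA, mem_iff_apply_mem_of_sub_mem hL.le_dualSubmodule hA hAL, hAL,
    mem_iff_apply_mem_of_forall_apply_eq hAM, hAM, hAγ⟩

theorem mem_one_iff_exists_intCast {x : ℚ} : x ∈ (1 : Submodule ℤ ℚ) ↔ ∃ n : ℤ, x = n := by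
  simp [Submodule.mem_one, eq_comm]

theorem mem_dualL_iff {V : Type*} [AddCommGroup V] [Module ℚ V] {Φ : BilinForm ℚ V}
    {L : Submodule ℤ V} {v : V} : v ∈ dualL Φ L ↔ v ∈ Φ.dualSubmodule L :=
  forall₂_congr fun _ _ ↦ mem_one_iff_exists_intCast.symm

theorem mem_lambdaStarSet_of_forall_apply_mem {V : Type*} [AddCommGroup V] [Module ℚ V]
    {Φ : BilinForm ℚ V} {L : Submodule ℤ V} {W : Submodule ℚ V} {w : V} (hw : w ∈ W)
    (h : ∀ y ∈ L, y ∈ W → Φ w y ∈ (1 : Submodule ℤ ℚ)) : w ∈ lambdaStarSet Φ L W :=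
  ⟨hw, fun y hy hyW ↦ mem_one_iff_exists_intCast.mp (h y hy hyW)⟩

/-- **lifting to the discriminant kernel.** With `L`, `U`, `I`, `Ĩ`,
`Ũ`, `W̃`, `Λ̃`, `Λ̃*`, `I_{L*}` as in the context, given `M ∈ SL(I_{L*}, I)`
(an automorphism of `U` preserving `I`, of determinant 1, with `M(u) − u ∈ I` for
`u ∈ I_{L*}`) and `γ ∈ Γ_Λ` (an isometry of `W̃` preserving `Λ̃` with
`γ(w) − w ∈ Λ̃` for `w ∈ Λ̃*`), there is an isometry `A` of `V` with `A(L) = L`,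
`A(μ) − μ ∈ L` for `μ ∈ L*`, `A(U) = U`, `A|_U = M`, and `A(w) − γ(w) ∈ U` for
`w ∈ W̃`. -/
theorem stmt18 {V : Type*} [AddCommGroup V] [Module ℚ V] [FiniteDimensional ℚ V]
    (Φ : V →ₗ[ℚ] V →ₗ[ℚ] ℚ)
    (hsymm : ∀ v w : V, Φ v w = Φ w v)
    (hnd : ∀ v : V, (∀ w : V, Φ v w = 0) → v = 0)
    (L : Submodule ℤ V) (hfg : L.FG)
    (hLspan : Submodule.span ℚ (L : Set V) = ⊤)
    (heven : ∀ x ∈ L, ∃ n : ℤ, Φ x x = 2 * (n : ℚ))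
    (U : Submodule ℚ V)
    (hUiso : ∀ u ∈ U, ∀ u' ∈ U, Φ u u' = 0)
    (I : Submodule ℤ V) (hI : I = U.restrictScalars ℤ ⊓ L)
    (hU : U = Submodule.span ℚ (I : Set V))
    (It : Submodule ℤ V) (hItdual : (It : Set V) ⊆ dualL Φ L)
    (hItuni : Unimodular Φ It I)
    (Ut : Submodule ℚ V) (hUt : Ut = Submodule.span ℚ (It : Set V))
    (Wt : Submodule ℚ V) (hWt : Wt = perp Φ (U ⊔ Ut))
    -- M ∈ SL(I_{L*}, I):
    (M : ↥U ≃ₗ[ℚ] ↥U)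
    (hMI : ∀ x : ↥U, (x : V) ∈ I ↔ (M x : V) ∈ I)
    (hMdet : LinearMap.det M.toLinearMap = 1)
    (hMILstar : ∀ x : ↥U, (x : V) ∈ dualL Φ L → (M x : V) - (x : V) ∈ I)
    -- γ ∈ Γ_Λ, i.e. an isometry of W̃ preserving Λ̃ and trivial on Λ̃*/Λ̃:
    (γ : ↥Wt ≃ₗ[ℚ] ↥Wt)
    (hγiso : ∀ x y : ↥Wt, Φ (γ x : V) (γ y : V) = Φ (x : V) (y : V))
    (hγΛ : ∀ x : ↥Wt, (x : V) ∈ L → (γ x : V) ∈ L)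
    (hγΛ' : ∀ x : ↥Wt, (x : V) ∈ L → (γ.symm x : V) ∈ L)
    (hγstar : ∀ x : ↥Wt, (x : V) ∈ lambdaStarSet Φ L Wt →
      (γ x : V) - (x : V) ∈ lambdaSet L Wt) :
    ∃ A : V ≃ₗ[ℚ] V,
      (∀ v w : V, Φ (A v) (A w) = Φ v w) ∧
      (∀ x : V, x ∈ L ↔ A x ∈ L) ∧
      (∀ μ ∈ dualL Φ L, A μ - μ ∈ L) ∧
      (∀ x : V, x ∈ U ↔ A x ∈ U) ∧
      (∀ x : ↥U, A (x : V) = (M x : V)) ∧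
      (∀ w : ↥Wt, A (w : V) - (γ w : V) ∈ U) := by
  have hB : BilinForm.IsSymm Φ := ⟨hsymm⟩
  have hnd' : BilinForm.Nondegenerate Φ := .ofSeparatingLeft hnd
  have : L.IsLattice ℚ := ⟨hfg, hLspan⟩
  simp only [mem_dualL_iff] at hMILstar ⊢
  exact stmt18_general hnd' hB L (isEvenLattice_of_forall_even hB heven) U hUiso I hI hU It
    (fun x hx ↦ mem_dualL_iff.mp (hItdual hx)) hItuni.2 Wt (hUt ▸ hWt) M hMI hMILstar γ hγiso
    fun w hw ↦ (hγstar w (mem_lambdaStarSet_of_forall_apply_mem w.2 hw)).1
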